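/- arXiv:2102.08569 — 2 statements merged into one kernel-verified Lean document; each statement's English description precedes it below -/
import Mathlib

section
/- Let G be a weighted digraph with positive edge weights on a finite vertex set V, and let π : V → ℕ be injective. Let P = (x₀, …, x_k) be a shortest path from u = x₀ to v = x_k, and let w = x_m be an internal vertex of P (0 < m < k) such that π(w) ≤ π(z) for every vertex z that is an internal vertex of some shortest path from u to v. Let u′ = x_i and v′ = x_j with i < m < j. Then w is an internal vertex of some shortest path from u′ to v′, and π(w) ≤ π(z′) for every vertex z′ that is an internal vertex of some shortest path from u′ to v′. -/
/-- The length of a walk `p` (a list of vertices) in the weighted digraph with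
weight function `W`, i.e. the sum of the weights of consecutive pairs. -/
def walkLen {V : Type*} (W : V → V → ℕ∞) (p : List V) : ℕ∞ :=
  ((p.zip p.tail).map fun q => W q.1 q.2).sum

/-- `p` is a walk from `u` to `v`: it is nonempty, starts at `u`, ends at `v`,
and every consecutive pair is an edge (finite weight). -/
def IsWalk {V : Type*} (W : V → V → ℕ∞) (u v : V) (p : List V) : Prop :=
  p.head? = some u ∧ p.getLast? = some v ∧ p.Chain' fun x y => W x y ≠ ⊤

/-- The distance from `u` to `v`: the infimum of lengths of walks from `u` to `v`
(`⊤` if there is no walk). -/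
noncomputable def gdist {V : Type*} (W : V → V → ℕ∞) (u v : V) : ℕ∞ :=
  sInf {d | ∃ p, IsWalk W u v p ∧ walkLen W p = d}

/-- `p` is a shortest path from `u` to `v`: a walk from `u` to `v` whose length
equals the distance. -/
def IsShortestPath {V : Type*} (W : V → V → ℕ∞) (u v : V) (p : List V) : Prop :=
  IsWalk W u v p ∧ walkLen W p = gdist W u v

theorem walkLen_cc {V : Type*} (W : V → V → ℕ∞) (x y : V) (l : List V) :
    walkLen W (x :: y :: l) = W x y + walkLen W (y :: l) := by
  simp [walkLen]

theorem walkLen_split {V : Type*} (W : V → V → ℕ∞) (x : V) (A B : List V) :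
    walkLen W (A ++ x :: B) = walkLen W (A ++ [x]) + walkLen W (x :: B) := by
  induction A with
  | nil => simp [walkLen]
  | cons a A ih =>
    cases A with
    | nil =>
      simp only [List.cons_append, List.nil_append, walkLen_cc]
      simp [walkLen]
    | cons b A =>
      simp only [List.cons_append, walkLen_cc] at ih ⊢
      rw [ih, add_assoc]

theorem walkLen_ne_top {V : Type*} (W : V → V → ℕ∞) (l : List V)
    (h : l.IsChain fun x y => W x y ≠ ⊤) : walkLen W l ≠ ⊤ := by
  induction l with
  | nil => simp [walkLen]
  | cons a l ih =>
    cases l with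
    | nil => simp [walkLen]
    | cons b l =>
      rw [walkLen_cc]
      rw [List.isChain_cons_cons] at h
      exact WithTop.add_ne_top.2 ⟨h.1, ih h.2⟩

theorem walkLen_glue {V : Type*} (W : V → V → ℕ∞) (a b : V) (A q C : List V)
    (ha : q.head? = some a) (hb : q.getLast? = some b) :
    walkLen W (A ++ q ++ C) = walkLen W (A ++ [a]) + walkLen W q + walkLen W (b :: C) := by
  obtain ⟨q', rfl⟩ := List.getLast?_eq_some_iff.1 hb
  rw [show A ++ (q' ++ [b]) ++ C = (A ++ q') ++ b :: C by simp, walkLen_split]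
  congr 1
  obtain ⟨q'', h⟩ := List.head?_eq_some_iff.1 ha
  rw [List.append_assoc, h, walkLen_split]

theorem chain_glue {V : Type*} (R : V → V → Prop) (a b : V) (A q C : List V)
    (ha : q.head? = some a) (hb : q.getLast? = some b) :
    (A ++ q ++ C).IsChain R ↔ (A ++ [a]).IsChain R ∧ q.IsChain R ∧ (b :: C).IsChain R := by
  obtain ⟨q', rfl⟩ := List.getLast?_eq_some_iff.1 hb
  rw [show A ++ (q' ++ [b]) ++ C = (A ++ q') ++ b :: C by simp, List.isChain_split]
  obtain ⟨q'', h⟩ := List.head?_eq_some_iff.1 ha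
  rw [List.append_assoc, h, List.isChain_split, and_assoc]

theorem mem_internal {V : Type*} (z : V) (A q C : List V)
    (h : z ∈ q.tail.dropLast) : z ∈ (A ++ q ++ C).tail.dropLast := by
  cases q with
  | nil => simp at h
  | cons a q =>
    rcases List.eq_nil_or_concat' q with rfl | ⟨s, b, rfl⟩
    · simp at h
    · simp only [List.tail_cons, List.dropLast_concat] at h
      cases A with
      | nil => simp [h]
      | cons c A =>
        rw [show (c :: A ++ a :: (s ++ [b]) ++ C).tail = (A ++ a :: s) ++ b :: C by simp,
          List.dropLast_append_cons]
        simp [h]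

theorem gdist_le {V : Type*} (W : V → V → ℕ∞) (u v : V) (p : List V) (h : IsWalk W u v p) :
    gdist W u v ≤ walkLen W p := sInf_le ⟨p, h, rfl⟩

/-- Replacing a segment of a shortest path. -/
theorem replace_walk {V : Type*} (W : V → V → ℕ∞) (u v a b : V) (A q C r : List V)
    (hp : IsWalk W u v (A ++ q ++ C)) (ha : q.head? = some a) (hb : q.getLast? = some b)
    (hr : IsWalk W a b r) : IsWalk W u v (A ++ r ++ C) := by
  obtain ⟨h1, h2, h3⟩ := hp
  obtain ⟨r1, r2, r3⟩ := hr
  refine ⟨?_, ?_, ?_⟩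
  · simpa [List.head?_append, ha, r1] using h1
  · simpa [List.getLast?_append, hb, r2] using h2
  · have h3' := (chain_glue _ a b A q C ha hb).1 h3
    exact (chain_glue _ a b A r C r1 r2).2 ⟨h3'.1, r3, h3'.2.2⟩

theorem core {V : Type*} (W : V → V → ℕ∞) (u v a b : V) (A q C : List V)
    (hp : IsShortestPath W u v (A ++ q ++ C)) (ha : q.head? = some a)
    (hb : q.getLast? = some b) :
    IsShortestPath W a b q ∧
      ∀ r, IsShortestPath W a b r → IsShortestPath W u v (A ++ r ++ C) := by
  obtain ⟨hw, hl⟩ := hp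
  have hc := (chain_glue _ a b A q C ha hb).1 hw.2.2
  have hq : IsWalk W a b q := ⟨ha, hb, hc.2.1⟩
  have t1 := walkLen_ne_top W _ hc.1
  have t3 := walkLen_ne_top W _ hc.2.2
  have hle : ∀ r, IsWalk W a b r → walkLen W q ≤ walkLen W r := by
    intro r hr
    have := gdist_le W u v _ (replace_walk W u v a b A q C r hw ha hb hr)
    rw [← hl, walkLen_glue W a b A q C ha hb, walkLen_glue W a b A r C hr.1 hr.2.1] at this
    exact (ENat.add_le_add_iff_left t1).1 ((ENat.add_le_add_iff_right t3).1 this)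
  have hqd : walkLen W q = gdist W a b := by
    apply le_antisymm _ (gdist_le W a b q hq)
    apply le_sInf
    rintro d ⟨r, hr, rfl⟩
    exact hle r hr
  refine ⟨⟨hq, hqd⟩, fun r hr => ⟨replace_walk W u v a b A q C r hw ha hb hr.1, ?_⟩⟩
  rw [← hl, walkLen_glue W a b A q C ha hb, walkLen_glue W a b A r C hr.1.1 hr.1.2.1, hr.2, hqd]

theorem min_label_internal_vertex_of_subpath {V : Type*} [Fintype V]
    (W : V → V → ℕ∞) (hpos : ∀ x y, W x y ≠ 0)
    (π : V → ℕ) (hπ : Function.Injective π)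
    (u v : V) (p : List V) (hp : IsShortestPath W u v p)
    (m : ℕ) (hm0 : 0 < m) (hmk : m + 1 < p.length)
    (w : V) (hw : w = p.get ⟨m, lt_trans (Nat.lt_succ_self m) hmk⟩)
    (hmin : ∀ z : V, (∃ q, IsShortestPath W u v q ∧ z ∈ q.tail.dropLast) → π w ≤ π z)
    (i j : ℕ) (him : i < m) (hmj : m < j) (hj : j < p.length) :
    (∃ q, IsShortestPath W (p.get ⟨i, lt_trans (lt_trans him hmj) hj⟩)
        (p.get ⟨j, hj⟩) q ∧ w ∈ q.tail.dropLast) ∧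
      ∀ z' : V, (∃ q, IsShortestPath W (p.get ⟨i, lt_trans (lt_trans him hmj) hj⟩)
          (p.get ⟨j, hj⟩) q ∧ z' ∈ q.tail.dropLast) → π w ≤ π z' := by
  obtain ⟨q, hq⟩ : ∃ q, q = (p.drop i).take (j - i + 1) := ⟨_, rfl⟩
  have hpe : p = p.take i ++ q ++ p.drop (j + 1) := by
    have h1 : p.drop (j + 1) = (p.drop i).drop (j - i + 1) := by
      rw [List.drop_drop]; congr 1; omega
    rw [h1, hq, List.append_assoc, List.take_append_drop, List.take_append_drop]
  have hlen : q.length = j - i + 1 := by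
    rw [hq, List.length_take, List.length_drop]; omega
  have hget : ∀ n, n < j - i + 1 → q[n]? = p[i + n]? := by
    intro n hn
    rw [hq, List.getElem?_take_of_lt hn, List.getElem?_drop]
  have ha : q.head? = some (p.get ⟨i, lt_trans (lt_trans him hmj) hj⟩) := by
    rw [List.head?_eq_getElem?, hget 0 (by omega)]
    simp
  have hb : q.getLast? = some (p.get ⟨j, hj⟩) := by
    rw [List.getLast?_eq_getElem?, hlen, hget _ (by omega),
      show i + (j - i + 1 - 1) = j by omega]
    simp
  obtain ⟨c1, c2⟩ := core W u v _ _ (p.take i) q (p.drop (j + 1)) (hpe ▸ hp) ha hb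
  refine ⟨⟨q, c1, ?_⟩, ?_⟩
  · rw [List.mem_iff_getElem]
    refine ⟨m - i - 1, by simp [hlen]; omega, ?_⟩
    have h := hget (m - i - 1 + 1) (by omega)
    rw [show i + (m - i - 1 + 1) = m by omega,
      List.getElem?_eq_getElem (by omega), List.getElem?_eq_getElem (by omega)] at h
    rw [List.getElem_dropLast, List.getElem_tail, hw]
    simpa using h
  · rintro z ⟨r, hr, hz⟩
    exact hmin z ⟨_, c2 r hr, mem_internal z _ r _ hz⟩
end

section
/- Let S be a finite nonempty subset of the field 𝔽, and let the values Z_{i,j} (one for each edge of G) be chosen independently and uniformly at random from S; let SA_Z(G) denote the matrix over 𝔽[x] obtained from SA(G) by substituting Z_{i,j} for each variable z_{i,j}. Fix vertices u, v with ‖uv‖ < ∞. Then with probability at least 1 − n/|S| over the choice of the Z_{i,j}, deg*_x( adj(SA_Z(G))_{u,v} ) = ‖uv‖. -/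
/-- The symbolic adjacency matrix of the digraph on `Fin n` with weight function `W`
(`W i j = ⊤` meaning no edge), with the variable `z_{i,j}` substituted by the field
element `Z (i, j)`; a matrix over `𝔽[x]`. -/
noncomputable def symbAdjZ {F : Type*} [Field F] {n : ℕ} (W : Fin n → Fin n → ℕ∞)
    (Z : Fin n × Fin n → F) : Matrix (Fin n) (Fin n) (Polynomial F) :=
  fun i j =>
    if i = j then 1
    else if W i j ≠ ⊤ then
      Polynomial.C (Z (i, j)) * Polynomial.X ^ (W i j).toNat
    else 0

theorem aux_gdist_self {V : Type*} (W : V → V → ℕ∞) (v : V) : gdist W v v = 0 := by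
  apply le_antisymm _ (zero_le)
  refine sInf_le ⟨[v], ⟨by simp, by simp, ?_⟩, by simp [walkLen]⟩
  simp [List.Chain']

theorem aux_gdist_attained {V : Type*} (W : V → V → ℕ∞) (u v : V) (h : gdist W u v ≠ ⊤) :
    ∃ p, IsWalk W u v p ∧ walkLen W p = gdist W u v := by
  have hne : {d | ∃ p, IsWalk W u v p ∧ walkLen W p = d}.Nonempty := by
    by_contra hc
    rw [Set.not_nonempty_iff_eq_empty] at hc
    apply h
    rw [gdist, hc, sInf_empty]
  exact csInf_mem hne

theorem aux_walk_cons {V : Type*} (W : V → V → ℕ∞) (u j v : V) (l : List V) :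
    IsWalk W u v (u :: j :: l) ↔ W u j ≠ ⊤ ∧ IsWalk W j v (j :: l) := by
  simp only [IsWalk, List.Chain', List.isChain_cons_cons, List.head?_cons, true_and,
    List.getLast?_cons_cons]
  tauto

theorem aux_len_cons {V : Type*} (W : V → V → ℕ∞) (u j : V) (l : List V) :
    walkLen W (u :: j :: l) = W u j + walkLen W (j :: l) := by
  simp [walkLen]

theorem aux_gdist_le {V : Type*} (W : V → V → ℕ∞) (u j v : V) :
    gdist W u v ≤ W u j + gdist W j v := by
  by_cases h1 : W u j = ⊤
  · simp [h1]
  by_cases h2 : gdist W j v = ⊤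
  · simp [h2]
  obtain ⟨p, hp, hl⟩ := aux_gdist_attained W j v h2
  rw [← hl]
  match p, hp with
  | [], hp => simp [IsWalk] at hp
  | a :: l, hp =>
    have ha : a = j := by simpa using hp.1
    subst ha
    rw [← aux_len_cons]
    exact sInf_le ⟨_, (aux_walk_cons W u a v l).2 ⟨h1, hp⟩, rfl⟩

theorem aux_next {V : Type*} (W : V → V → ℕ∞) (u v : V) (huv : u ≠ v)
    (h : gdist W u v ≠ ⊤) : ∃ j, W u j ≠ ⊤ ∧ gdist W u v = W u j + gdist W j v := by
  obtain ⟨p, hp, hl⟩ := aux_gdist_attained W u v h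
  match p, hp, hl with
  | [], hp, _ => simp [IsWalk] at hp
  | [a], hp, _ =>
    have ha : a = u := by simpa using hp.1
    have hb : a = v := by simpa using hp.2.1
    exact absurd (ha.symm.trans hb) huv
  | a :: j :: l, hp, hl =>
    have ha : a = u := by simpa using hp.1
    subst ha
    obtain ⟨h1, h2⟩ := (aux_walk_cons W a j v l).1 hp
    refine ⟨j, h1, le_antisymm (aux_gdist_le W a j v) ?_⟩
    rw [← hl, aux_len_cons]
    gcongr
    exact sInf_le ⟨_, h2, rfl⟩

/-- Symbolic adjacency matrix over a commutative ring. -/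
noncomputable def auxM {R : Type*} [CommRing R] {n : ℕ} (W : Fin n → Fin n → ℕ∞)
    (Z : Fin n × Fin n → R) : Matrix (Fin n) (Fin n) (Polynomial R) :=
  fun i j =>
    if i = j then 1
    else if W i j ≠ ⊤ then
      Polynomial.C (Z (i, j)) * Polynomial.X ^ (W i j).toNat
    else 0

theorem aux_map {R R' : Type*} [CommRing R] [CommRing R'] (f : R →+* R') {n : ℕ}
    (W : Fin n → Fin n → ℕ∞) (Z : Fin n × Fin n → R) :
    (Polynomial.mapRingHom f).mapMatrix (auxM W Z) = auxM W (fun e => f (Z e)) := by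
  ext1 i j
  simp only [auxM, RingHom.mapMatrix_apply, Matrix.map_apply]
  split_ifs <;> simp

theorem aux_row {F : Type*} [CommRing F] {n : ℕ} (W : Fin n → Fin n → ℕ∞)
    (Z : Fin n × Fin n → F) (i v : Fin n) :
    (auxM W Z).adjugate i v = (if i = v then (auxM W Z).det else 0) -
      ∑ j ∈ Finset.univ.erase i, auxM W Z i j * (auxM W Z).adjugate j v := by
  have h : (auxM W Z * (auxM W Z).adjugate) i v =
      ((auxM W Z).det • (1 : Matrix (Fin n) (Fin n) (Polynomial F))) i v := by
    rw [Matrix.mul_adjugate]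
  rw [Matrix.mul_apply, ← Finset.add_sum_erase _ _ (Finset.mem_univ i)] at h
  have h1 : auxM W Z i i = 1 := by simp [auxM]
  rw [h1, one_mul, Matrix.smul_apply, Matrix.one_apply] at h
  rw [eq_sub_iff_add_eq, h]
  simp

theorem aux_dvd {F : Type*} [CommRing F] {n : ℕ} (W : Fin n → Fin n → ℕ∞)
    (hpos : ∀ i j, W i j ≠ 0) (Z : Fin n × Fin n → F) (v : Fin n) (m : ℕ) :
    ∀ i, (m : ℕ∞) ≤ gdist W i v → Polynomial.X ^ m ∣ (auxM W Z).adjugate i v := by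
  induction m using Nat.strong_induction_on with
  | _ m ih =>
  intro i hi
  rcases Nat.eq_zero_or_pos m with rfl | hm
  · simp
  have hiv : i ≠ v := by
    rintro rfl
    rw [aux_gdist_self] at hi
    simp at hi
    omega
  rw [aux_row, if_neg hiv, zero_sub, dvd_neg]
  refine Finset.dvd_sum fun j hj => ?_
  have hij : i ≠ j := (Finset.ne_of_mem_erase hj).symm
  simp only [auxM, if_neg hij]
  split_ifs with hW
  swap
  · simp
  obtain ⟨w, hw⟩ := ENat.ne_top_iff_exists.1 hW
  have hw0 : w ≠ 0 := by
    rintro rfl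
    exact hpos i j (by rw [← hw]; rfl)
  rw [← hw, ENat.toNat_natCast]
  have h2 : ((m - w : ℕ) : ℕ∞) ≤ gdist W j v := by
    have h3 := hi.trans (aux_gdist_le W i j v)
    rw [← hw] at h3
    rcases hg : gdist W j v with _ | g
    · exact le_top
    · rw [hg] at h3
      have h4 : (m : ℕ∞) ≤ ((w + g : ℕ) : ℕ∞) := by
        rw [Nat.cast_add]; exact h3
      have h5 : m ≤ w + g := by exact_mod_cast h4
      change ((m - w : ℕ) : ℕ∞) ≤ ((g : ℕ) : ℕ∞)
      exact_mod_cast (by omega : m - w ≤ g)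
  have h6 := ih (m - w) (by omega) j h2
  have h7 : (Polynomial.X : Polynomial F) ^ m ∣ Polynomial.X ^ w * Polynomial.X ^ (m - w) := by
    rw [← pow_add]; exact pow_dvd_pow _ (by omega)
  rw [mul_assoc]
  exact Dvd.dvd.mul_left (h7.trans (mul_dvd_mul_left _ h6)) _

theorem aux_det_coeff {F : Type*} [CommRing F] {n : ℕ} (W : Fin n → Fin n → ℕ∞)
    (hpos : ∀ i j, W i j ≠ 0) (Z : Fin n × Fin n → F) : ((auxM W Z).det).coeff 0 = 1 := by
  rw [← Polynomial.constantCoeff_apply, RingHom.map_det]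
  convert Matrix.det_one (n := Fin n) (R := F)
  ext i j
  simp only [auxM, RingHom.mapMatrix_apply, Matrix.map_apply, Matrix.one_apply]
  split_ifs with h1 h2
  · simp
  · have : (W i j).toNat ≠ 0 := by
      intro h
      rw [ENat.toNat_eq_zero] at h
      exact h.elim (hpos i j) h2
    simp [Polynomial.coeff_X_pow, this.symm]
  · simp

theorem aux_exists {F : Type*} [Field F] {n : ℕ} (W : Fin n → Fin n → ℕ∞)
    (hpos : ∀ i j, W i j ≠ 0) (hloop : ∀ i, W i i = ⊤) (v : Fin n) :
    ∃ Z : Fin n × Fin n → F, ∀ (d : ℕ) (i : Fin n), gdist W i v = d →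
      ((auxM W Z).adjugate i v).coeff d ≠ 0 := by
  classical
  have hex : ∀ i, ∃ j, i ≠ v → gdist W i v ≠ ⊤ →
      W i j ≠ ⊤ ∧ gdist W i v = W i j + gdist W j v := by
    intro i
    by_cases h1 : i ≠ v
    · by_cases h2 : gdist W i v ≠ ⊤
      · obtain ⟨j, hj⟩ := aux_next W i v h1 h2
        exact ⟨j, fun _ _ => hj⟩
      · exact ⟨i, fun _ h => absurd h h2⟩
    · exact ⟨i, fun h => absurd h h1⟩
  choose nx hnx using hex
  refine ⟨fun e => if e.2 = nx e.1 then 1 else 0, fun d => ?_⟩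
  set Z : Fin n × Fin n → F := fun e => if e.2 = nx e.1 then 1 else 0 with hZ
  induction d using Nat.strong_induction_on with
  | _ d ih =>
  intro i hi
  by_cases hiv : i = v
  · subst hiv
    rw [aux_gdist_self] at hi
    have hd : d = 0 := by exact_mod_cast hi.symm
    subst hd
    rw [aux_row, if_pos rfl, Polynomial.coeff_sub, aux_det_coeff W hpos,
      Polynomial.finsetSum_coeff, Finset.sum_eq_zero, sub_zero]
    · exact one_ne_zero
    · intro j hj
      have hij : i ≠ j := (Finset.ne_of_mem_erase hj).symm
      rw [Polynomial.mul_coeff_zero]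
      simp only [auxM, if_neg hij]
      split_ifs with h2
      · have : (W i j).toNat ≠ 0 := by
          intro h
          rw [ENat.toNat_eq_zero] at h
          exact h.elim (hpos i j) h2
        simp [Polynomial.coeff_X_pow, this.symm]
      · simp
  · obtain ⟨hW, hg⟩ := hnx i hiv (by rw [hi]; exact ENat.coe_ne_top d)
    have hne : nx i ≠ i := by
      intro h
      rw [h] at hW
      exact hW (hloop i)
    rw [aux_row, if_neg hiv, zero_sub, Polynomial.coeff_neg, neg_ne_zero,
      Finset.sum_eq_single (nx i)]
    · obtain ⟨w, hw⟩ := ENat.ne_top_iff_exists.1 hW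
      have hw0 : w ≠ 0 := by
        rintro rfl
        exact hpos i _ (by rw [← hw]; rfl)
      have hgt : gdist W (nx i) v ≠ ⊤ := by
        intro h
        rw [h, hi] at hg
        simp at hg
      obtain ⟨g, hg'⟩ := ENat.ne_top_iff_exists.1 hgt
      rw [← hw, ← hg', hi] at hg
      have hd : d = w + g := by exact_mod_cast hg
      have h1 : auxM W Z i (nx i) = Polynomial.X ^ w := by
        simp only [auxM, if_neg hne.symm, if_pos hW]
        rw [← hw]
        simp [hZ]
      rw [h1, hd, add_comm, Polynomial.coeff_X_pow_mul]
      exact ih g (by omega) (nx i) hg'.symm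
    · intro j hj hjn
      have hij : i ≠ j := (Finset.ne_of_mem_erase hj).symm
      have : auxM W Z i j = 0 := by
        simp only [auxM, if_neg hij]
        simp [hZ, hjn]
      rw [this, zero_mul]
    · intro h
      exact absurd (Finset.mem_erase.2 ⟨hne, Finset.mem_univ _⟩) h

/-- All coefficients have bounded total degree. -/
def auxBd {F σ : Type*} [Field F] (k : ℕ) (p : Polynomial (MvPolynomial σ F)) : Prop :=
  ∀ m, (p.coeff m).totalDegree ≤ k

theorem aux_bd_prod {F σ ι : Type*} [Field F] (s : Finset ι)
    (f : ι → Polynomial (MvPolynomial σ F)) (h : ∀ i, auxBd 1 (f i)) :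
    auxBd s.card (∏ i ∈ s, f i) := by
  classical
  induction s using Finset.induction_on with
  | empty =>
    intro m
    simp only [Finset.prod_empty, Polynomial.coeff_one]
    split_ifs <;> simp
  | insert a s ha ih =>
    intro m
    rw [Finset.prod_insert ha, Finset.card_insert_of_notMem ha, Polynomial.coeff_mul]
    refine MvPolynomial.totalDegree_finsetSum_le fun x _ => ?_
    refine (MvPolynomial.totalDegree_mul _ _).trans ?_
    have := h a x.1
    have := ih x.2
    omega

theorem aux_bd_det {F σ : Type*} [Field F] {n : ℕ}
    (A : Matrix (Fin n) (Fin n) (Polynomial (MvPolynomial σ F))) (h : ∀ i j, auxBd 1 (A i j)) :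
    auxBd n A.det := by
  intro m
  rw [Matrix.det_apply, Polynomial.finsetSum_coeff]
  refine MvPolynomial.totalDegree_finsetSum_le fun x _ => ?_
  have h1 := aux_bd_prod Finset.univ (fun i => A (x i) i) (fun i => h _ _) m
  rw [Finset.card_univ, Fintype.card_fin] at h1
  rcases Int.units_eq_one_or (Equiv.Perm.sign x) with hs | hs
  · rw [hs, one_smul]; exact h1
  · rw [hs, Units.neg_smul, one_smul, Polynomial.coeff_neg, MvPolynomial.totalDegree_neg]
    exact h1

theorem aux_bd_adj {F : Type*} [Field F] {n : ℕ} (W : Fin n → Fin n → ℕ∞) (u v : Fin n) :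
    auxBd n ((auxM W (fun e => (MvPolynomial.X e : MvPolynomial (Fin n × Fin n) F))).adjugate
      u v) := by
  rw [Matrix.adjugate_apply]
  apply aux_bd_det
  intro i j m
  rw [Matrix.updateRow_apply]
  split_ifs with h
  · rw [Pi.single_apply]
    split_ifs
    · rw [Polynomial.coeff_one]; split_ifs <;> simp
    · simp
  · simp only [auxM]
    split_ifs
    · rw [Polynomial.coeff_one]; split_ifs <;> simp
    · rw [Polynomial.coeff_C_mul_X_pow]; split_ifs <;> simp
    · simp

open scoped Classical in
theorem aux_sz {F σ : Type*} [Field F] [Fintype σ] [DecidableEq σ] (p : MvPolynomial σ F) (hp : p ≠ 0)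
    (S : Finset F) (hS : S.Nonempty) :
    ((Finset.univ.filter fun Z : σ → S => MvPolynomial.eval (fun e => (Z e : F)) p = 0).card : ℝ)
      ≤ (p.totalDegree : ℝ) / S.card * Fintype.card (σ → S) := by
  set e := Fintype.equivFin σ
  have hq : MvPolynomial.rename e p ≠ 0 := by
    rwa [Ne, MvPolynomial.rename_eq_zero_iff_of_injective _ e.injective]
  have h := MvPolynomial.schwartz_zippel_totalDegree hq S
  have hS' : 0 < S.card := hS.card_pos
  rw [div_le_iff₀ (by positivity)] at h
  have hc : (Finset.univ.filter fun Z : σ → S =>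
      MvPolynomial.eval (fun e => (Z e : F)) p = 0).card ≤
      ((Fintype.piFinset fun _ => S).filter fun f : Fin (Fintype.card σ) → F =>
        MvPolynomial.eval f (MvPolynomial.rename e p) = 0).card := by
    refine Finset.card_le_card_of_injOn (fun Z k => (Z (e.symm k) : F)) ?_ ?_
    · intro Z hZ
      have hZ' := (Finset.mem_filter.1 (Finset.mem_coe.1 hZ)).2
      refine Finset.mem_coe.2 (Finset.mem_filter.2 ⟨by simp, ?_⟩)
      rw [MvPolynomial.eval_rename]
      convert hZ' using 3
      ext x
      simp
    · intro Z _ Z' _ hZ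
      ext x
      simpa using congrFun hZ (e x)
  have h' : ((((Fintype.piFinset fun _ => S).filter fun f : Fin (Fintype.card σ) → F =>
        MvPolynomial.eval f (MvPolynomial.rename e p) = 0).card : ℝ)) ≤
      ((MvPolynomial.rename e p).totalDegree : ℝ) / S.card * (S.card : ℝ) ^ Fintype.card σ := by
    have := (NNRat.cast_le (K := ℝ)).2 h
    push_cast at this
    exact this
  have hd : (MvPolynomial.rename e p).totalDegree ≤ p.totalDegree :=
    MvPolynomial.totalDegree_rename_le _ _
  have hcard : (Fintype.card (σ → S) : ℝ) = (S.card : ℝ) ^ Fintype.card σ := by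
    simp
  rw [hcard]
  calc _ ≤ _ := Nat.cast_le.2 hc
    _ ≤ _ := h'
    _ ≤ _ := by gcongr

open scoped Classical in
theorem random_substitution_trailingDegree_eq_dist {F : Type*} [Field F] {n : ℕ}
    (W : Fin n → Fin n → ℕ∞) (hpos : ∀ i j, W i j ≠ 0) (hloop : ∀ i, W i i = ⊤)
    (S : Finset F) (hS : S.Nonempty) (u v : Fin n) (huv : gdist W u v ≠ ⊤) :
    ((1 : ℝ) - (n : ℝ) / (S.card : ℝ)) * Fintype.card (Fin n × Fin n → S) ≤
      ((Finset.univ.filter fun Z : Fin n × Fin n → S =>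
        ((symbAdjZ W fun e => (Z e : F)).adjugate u v).trailingDegree =
          gdist W u v).card : ℝ) := by
  obtain ⟨d, hd⟩ := ENat.ne_top_iff_exists.1 huv
  set P : MvPolynomial (Fin n × Fin n) F :=
    ((auxM W (fun e => (MvPolynomial.X e : MvPolynomial (Fin n × Fin n) F))).adjugate
      u v).coeff d with hP
  have hPdeg : P.totalDegree ≤ n := aux_bd_adj W u v d
  have hev : ∀ Z : Fin n × Fin n → F,
      MvPolynomial.eval Z P = ((auxM W Z).adjugate u v).coeff d := by
    intro Z
    have h1 := aux_map (MvPolynomial.eval Z) W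
      (fun e => (MvPolynomial.X e : MvPolynomial (Fin n × Fin n) F))
    simp only [MvPolynomial.eval_X] at h1
    rw [← h1, ← RingHom.map_adjugate, RingHom.mapMatrix_apply, Matrix.map_apply,
      Polynomial.coe_mapRingHom, Polynomial.coeff_map]
  have hP0 : P ≠ 0 := by
    obtain ⟨Z, hZ⟩ := aux_exists (F := F) W hpos hloop v
    intro h
    apply hZ d u hd.symm
    rw [← hev, h, map_zero]
  have hsz := aux_sz P hP0 S hS
  have hgood : ∀ Z : Fin n × Fin n → F, MvPolynomial.eval Z P ≠ 0 →
      ((symbAdjZ W Z).adjugate u v).trailingDegree = gdist W u v := by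
    intro Z hZ
    have hA : symbAdjZ W Z = auxM W Z := rfl
    rw [hev] at hZ
    rw [hA, ← hd]
    have hne : (auxM W Z).adjugate u v ≠ 0 := by
      intro h; rw [h] at hZ; simp at hZ
    apply le_antisymm (Polynomial.trailingDegree_le_of_ne_zero hZ)
    rw [Polynomial.trailingDegree_eq_natTrailingDegree hne]
    have := Polynomial.le_natTrailingDegree hne
      (Polynomial.X_pow_dvd_iff.1 (aux_dvd W hpos Z v d u hd.le))
    exact_mod_cast this
  have hsplit := Finset.card_filter_add_card_filter_not (s := Finset.univ)
    (fun Z : Fin n × Fin n → S => MvPolynomial.eval (fun e => (Z e : F)) P = 0)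
  rw [Finset.card_univ] at hsplit
  have hsplit' : ((Finset.univ.filter fun Z : Fin n × Fin n → S =>
      MvPolynomial.eval (fun e => (Z e : F)) P = 0).card : ℝ) +
      ((Finset.univ.filter fun Z : Fin n × Fin n → S =>
      ¬ MvPolynomial.eval (fun e => (Z e : F)) P = 0).card : ℝ) =
      Fintype.card (Fin n × Fin n → S) := by exact_mod_cast hsplit
  have hsub : ((Finset.univ.filter fun Z : Fin n × Fin n → S =>
      ¬ MvPolynomial.eval (fun e => (Z e : F)) P = 0).card : ℝ) ≤
      ((Finset.univ.filter fun Z : Fin n × Fin n → S =>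
        ((symbAdjZ W fun e => (Z e : F)).adjugate u v).trailingDegree =
          gdist W u v).card : ℝ) := by
    refine Nat.cast_le.2 (Finset.card_le_card fun Z hZ => ?_)
    rw [Finset.mem_filter] at hZ ⊢
    exact ⟨hZ.1, hgood _ hZ.2⟩
  have hle : (P.totalDegree : ℝ) / S.card * Fintype.card (Fin n × Fin n → S) ≤
      (n : ℝ) / S.card * Fintype.card (Fin n × Fin n → S) := by
    gcongr
  rw [sub_mul, one_mul]
  linarith
end
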